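/- For a non-degenerate C*-inclusion B ⊆ A, the following are equivalent: (i) the inclusion B ⊆ A is essential; (ii) there exists a set Φ of states of B such that every A-lift of Φ is jointly essentially faithful; (iii) there exists a set Φ of pure states of B such that every A-lift of Φ is jointly essentially faithful; (iii') there exists a set Φ of pure states of B such that every pure A-lift of Φ is jointly essentially faithful. -/

import Mathlib

open scoped ComplexOrder

/-- A state: a positive linear functional of norm one. -/
def IsState {E : Type*} [SeminormedAddCommGroup E] [NormedSpace ℂ E] [Mul E] [Star E]
    (φ : E →L[ℂ] ℂ) : Prop :=
  (∀ a : E, 0 ≤ φ (star a * a)) ∧ ‖φ‖ = 1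

/-- A pure state: an extreme point of the set of states. -/
def IsPureState {E : Type*} [SeminormedAddCommGroup E] [NormedSpace ℂ E] [Mul E] [Star E]
    (φ : E →L[ℂ] ℂ) : Prop :=
  φ ∈ Set.extremePoints ℝ {ψ : E →L[ℂ] ℂ | IsState ψ}

/-- `K_ψ = {a | ψ (x * a * y) = 0 for all x, y}`. -/
def Kset {E F : Type*} [Mul E] [Zero F] (ψ : E → F) : Set E :=
  {a | ∀ x y : E, ψ (x * a * y) = 0}

/-- Non-degeneracy of the inclusion `Bs ⊆ A`. -/
def NondegSet {A : Type*} [NonUnitalCStarAlgebra A] (Bs : Set A) : Prop :=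
  closure (Submodule.span ℂ {x : A | ∃ b ∈ Bs, ∃ a : A, x = b * a} : Set A) = Set.univ

/-- The inclusion `Bs ⊆ A` is essential. -/
def EssentialIncl {A : Type*} [NonUnitalCStarAlgebra A] (Bs : Set A) : Prop :=
  ∀ L : TwoSidedIdeal A, IsClosed (L : Set A) → (L : Set A) ≠ Set.univ →
    Bs ∩ (L : Set A) = {0} → (L : Set A) = {0}

open Filter Topology

/-- An order-free approximate unit. -/
theorem exists_apprUnit (E : Type*) [NonUnitalCStarAlgebra E] :
    ∃ l : Filter E, l.NeBot ∧ (∀ᶠ e in l, star e = e ∧ ‖e‖ ≤ 1) ∧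
      (∀ a : E, Tendsto (fun e => e * a) l (𝓝 a)) ∧
      (∀ a : E, Tendsto (fun e => a * e) l (𝓝 a)) := by
  let := CStarAlgebra.spectralOrder E
  have := CStarAlgebra.spectralOrderedRing E
  have h := CStarAlgebra.increasingApproximateUnit E
  refine ⟨_, h.neBot, ?_, h.tendsto_mul_right, h.tendsto_mul_left⟩
  filter_upwards [h.eventually_nonneg, h.eventually_norm] with e h1 h2
  exact ⟨(IsSelfAdjoint.of_nonneg h1).star_eq, h2⟩

/-- Cauchy-Schwarz for positive functionals. -/
theorem pos_cs {E : Type*} [NonUnitalCStarAlgebra E] (φ : E →L[ℂ] ℂ)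
    (hφ : ∀ a : E, 0 ≤ φ (star a * a)) (x y : E) :
    ‖φ (star x * y)‖ ^ 2 ≤ ‖φ (star x * x)‖ * ‖φ (star y * y)‖ := by
  let := CStarAlgebra.spectralOrder E
  have := CStarAlgebra.spectralOrderedRing E
  let f : E →ₚ[ℂ] ℂ := PositiveLinearMap.mk₀ (φ : E →ₗ[ℂ] ℂ) (by
    intro a ha
    obtain ⟨b, rfl⟩ := CStarAlgebra.nonneg_iff_eq_star_mul_self.1 ha
    exact hφ b)
  have h := norm_inner_le_norm (𝕜 := ℂ) (f.toPreGNS x) (f.toPreGNS y)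
  have hn : ∀ z : E, ‖f.toPreGNS z‖ ^ 2 = ‖φ (star z * z)‖ := by
    intro z
    have := f.preGNS_norm_sq (f.toPreGNS z)
    have h2 : f (star z * z) = φ (star z * z) := rfl
    rw [f.ofPreGNS_toPreGNS, h2] at this
    rw [← this]
    simp
  rw [f.preGNS_inner_def] at h
  have h3 : f (star x * y) = φ (star x * y) := rfl
  rw [f.ofPreGNS_toPreGNS, f.ofPreGNS_toPreGNS, h3] at h
  rw [← hn, ← hn, ← mul_pow]
  gcongr

/-- If `φ (a* a) = 0` then `φ a = 0`. -/
theorem pos_zero {E : Type*} [NonUnitalCStarAlgebra E] (φ : E →L[ℂ] ℂ)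
    (hφ : ∀ a : E, 0 ≤ φ (star a * a)) (a : E) (h : φ (star a * a) = 0) : φ a = 0 := by
  obtain ⟨l, hl, h1, h2, h3⟩ := exists_apprUnit E
  have h4 : Tendsto (fun e => φ (e * a)) l (𝓝 (φ a)) := (φ.continuous.tendsto a).comp (h2 a)
  have h5 : ∀ e, φ (e * a) = 0 := by
    intro e
    have := pos_cs φ hφ (star e) a
    rw [h] at this
    simpa using this
  simp only [h5] at h4
  exact (tendsto_nhds_unique h4 tendsto_const_nhds)

/-- For a state, `φ (e * e) → 1` along self-adjoint contractive approximate units. -/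
theorem state_tendsto {E : Type*} [NonUnitalCStarAlgebra E] (φ : E →L[ℂ] ℂ)
    (hφ : IsState φ) (l : Filter E) (h1 : ∀ᶠ e in l, star e = e ∧ ‖e‖ ≤ 1)
    (h2 : ∀ a : E, Tendsto (fun e => e * a) l (𝓝 a)) :
    Tendsto (fun e => φ (e * e)) l (𝓝 1) := by
  rcases l.eq_or_neBot with rfl | hl
  · exact tendsto_bot
  have key : Tendsto (fun e => ‖φ (e * e)‖) l (𝓝 1) := by
    rw [tendsto_order]
    constructor
    · intro c hc
      rcases lt_or_ge c 0 with hc0 | hc0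
      · exact Eventually.of_forall fun e => hc0.trans_le (norm_nonneg _)
      obtain ⟨d, hcd, hd1⟩ := exists_between hc
      have hd0 : 0 < d := hc0.trans_lt hcd
      have hex : ∃ x : E, ¬ ‖φ x‖ ≤ Real.sqrt d * ‖x‖ := by
        by_contra! hcon
        have := φ.opNorm_le_bound (Real.sqrt_nonneg d) hcon
        rw [hφ.2] at this
        have h3 : Real.sqrt d < 1 := by
          rw [Real.sqrt_lt' one_pos]; simpa using hd1
        linarith
      obtain ⟨x, hx⟩ := hex
      push Not at hx
      have hx2 : d * ‖x‖ ^ 2 < ‖φ x‖ ^ 2 := by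
        have := pow_lt_pow_left₀ hx (by positivity) two_ne_zero
        rwa [mul_pow, Real.sq_sqrt hd0.le] at this
      have h4 : Tendsto (fun e => ‖φ (e * x)‖ ^ 2) l (𝓝 (‖φ x‖ ^ 2)) :=
        (((φ.continuous.tendsto x).comp (h2 x)).norm).pow 2
      filter_upwards [h1, h4.eventually (lt_mem_nhds hx2)] with e he hlt
      have hcs := pos_cs φ hφ.1 e x
      rw [he.1] at hcs
      have h5 : ‖φ (star x * x)‖ ≤ ‖x‖ ^ 2 := by
        have := φ.le_opNorm (star x * x)
        rw [hφ.2, CStarRing.norm_star_mul_self] at this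
        linarith
      have h6 : d * ‖x‖ ^ 2 < ‖φ (e * e)‖ * ‖x‖ ^ 2 := by
        refine hlt.trans_le (hcs.trans ?_)
        gcongr
      have := lt_of_mul_lt_mul_right h6 (by positivity)
      linarith
    · intro c hc
      filter_upwards [h1] with e he
      have := φ.le_opNorm (e * e)
      have h3 : ‖e * e‖ ≤ 1 := (norm_mul_le _ _).trans (mul_le_one₀ he.2 (norm_nonneg _) he.2)
      rw [hφ.2] at this
      linarith
  have h7 : Tendsto (fun e => ((‖φ (e * e)‖ : ℝ) : ℂ)) l (𝓝 ((1 : ℝ) : ℂ)) :=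
    (Complex.continuous_ofReal.tendsto 1).comp key
  rw [Complex.ofReal_one] at h7
  refine h7.congr' ?_
  filter_upwards [h1] with e he
  have := hφ.1 e
  rw [he.1] at this
  exact (Complex.eq_coe_norm_of_nonneg this).symm

/-- A functional whose unital extension is contractive is positive. -/
theorem pos_of_unital_bound {E : Type*} [NonUnitalCStarAlgebra E] (σ : E →L[ℂ] ℂ)
    (h : ∀ (a : E) (c : ℂ), ‖σ a + c‖ ≤ ‖((a : Unitization ℂ E) + algebraMap ℂ _ c)‖) (b : E) :
    0 ≤ σ (star b * b) := by
  let := CStarAlgebra.spectralOrder (Unitization ℂ E)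
  have := CStarAlgebra.spectralOrderedRing (Unitization ℂ E)
  set a := star b * b with ha
  have hsa : star (a : Unitization ℂ E) = a := by
    rw [← Unitization.inr_star]; simp [ha]
  set t := ‖a‖ with ht
  have hta : ‖(a : Unitization ℂ E)‖ = t := Unitization.norm_inr (𝕜 := ℂ) a
  have ha0 : 0 ≤ (a : Unitization ℂ E) := by
    rw [ha, Unitization.inr_mul, Unitization.inr_star]
    exact star_mul_self_nonneg _
  rw [Complex.nonneg_iff]
  constructor
  · have h1 := h a (-(t : ℂ))
    have h2 : ‖((a : Unitization ℂ E) + algebraMap ℂ _ (-(t : ℂ)))‖ ≤ t := by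
      have e1 : ‖((a : Unitization ℂ E) + algebraMap ℂ _ (-(t : ℂ)))‖
          = ‖algebraMap ℝ (Unitization ℂ E) t - a‖ := by
        rw [← norm_neg]
        congr 1
        rw [IsScalarTower.algebraMap_apply ℝ ℂ (Unitization ℂ E) t]
        simp only [map_neg, neg_add_rev, neg_neg]
        exact (sub_eq_add_neg _ _).symm
      have h3 : (a : Unitization ℂ E) ≤ algebraMap ℝ (Unitization ℂ E) t :=
        (CStarAlgebra.norm_le_iff_le_algebraMap _ (norm_nonneg a) ha0).1 hta.le
      rw [e1, CStarAlgebra.norm_le_iff_le_algebraMap _ (norm_nonneg a) (sub_nonneg.2 h3)]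
      exact sub_le_self _ ha0
    have h4 := (Complex.abs_re_le_norm _).trans (h1.trans h2)
    simp only [Complex.add_re, Complex.neg_re, Complex.ofReal_re] at h4
    have := (abs_le.1 h4).1
    linarith
  · have h1 : ∀ n : ℝ, ((σ a).im + n) ^ 2 ≤ t ^ 2 + n ^ 2 := by
      intro n
      have h2 := h a (n * Complex.I)
      have h3 := (Complex.abs_im_le_norm _).trans h2
      simp only [Complex.add_im, Complex.mul_im, Complex.ofReal_re, Complex.I_im, mul_one,
        Complex.ofReal_im, Complex.I_re, mul_zero, add_zero] at h3
      have h4 : ‖((a : Unitization ℂ E) + algebraMap ℂ _ (n * Complex.I))‖ ^ 2 ≤ t ^ 2 + n ^ 2 := by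
        rw [sq ‖_ + _‖, ← CStarRing.norm_star_mul_self]
        have e2 : star ((a : Unitization ℂ E) + algebraMap ℂ _ (n * Complex.I)) *
            ((a : Unitization ℂ E) + algebraMap ℂ _ (n * Complex.I))
            = (a : Unitization ℂ E) * a + algebraMap ℂ _ ((n : ℂ) ^ 2) := by
          rw [star_add, hsa, ← algebraMap_star_comm]
          have e3 : star ((n : ℂ) * Complex.I) = -(n * Complex.I) := by simp
          have e4 : (algebraMap ℂ (Unitization ℂ E) ((n : ℂ) ^ 2))
              = -(algebraMap ℂ (Unitization ℂ E) (n * Complex.I) *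
                algebraMap ℂ (Unitization ℂ E) (n * Complex.I)) := by
            rw [← map_mul, ← map_neg]
            congr 1
            ring_nf
            simp
          rw [e3, e4, map_neg, add_mul, mul_add, mul_add,
            neg_mul, neg_mul, (Algebra.commutes (n * Complex.I) (a : Unitization ℂ E))]
          abel
        rw [e2]
        refine (norm_add_le _ _).trans ?_
        gcongr
        · refine (norm_mul_le _ _).trans ?_
          rw [hta, sq]
        · rw [norm_algebraMap']
          simp
      calc ((σ a).im + n) ^ 2 = |(σ a).im + n| ^ 2 := (sq_abs _).symm
        _ ≤ _ := by gcongr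
        _ ≤ _ := h4
    by_contra hne
    have hne : (σ a).im ≠ 0 := fun h => hne h.symm
    have h5 := h1 (t ^ 2 / (σ a).im)
    have h6 : 2 * (σ a).im * (t ^ 2 / (σ a).im) = 2 * t ^ 2 := by field_simp
    have h7 : 0 < (σ a).im ^ 2 := by positivity
    nlinarith [sq_nonneg t]

/-- A contractive functional tending to `1` along an approximate unit is positive. -/
theorem pos_of_tendsto {E : Type*} [NonUnitalCStarAlgebra E] (σ : E →L[ℂ] ℂ)
    (hσ : ‖σ‖ ≤ 1) (l : Filter E) [l.NeBot] (h1 : ∀ᶠ e in l, ‖e‖ ≤ 1)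
    (h2 : ∀ a : E, Tendsto (fun e => a * e) l (𝓝 a))
    (h3 : Tendsto σ l (𝓝 1)) (b : E) : 0 ≤ σ (star b * b) := by
  refine pos_of_unital_bound σ ?_ b
  intro a c
  have h4 : Tendsto (fun e => ‖σ (a * e) + c * σ e‖) l (𝓝 ‖σ a + c * 1‖) :=
    (((σ.continuous.tendsto a).comp (h2 a)).add (h3.const_mul c)).norm
  rw [mul_one] at h4
  refine le_of_tendsto h4 ?_
  filter_upwards [h1] with e he
  have e1 : σ (a * e) + c * σ e = σ (a * e + c • e) := by simp
  rw [e1]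
  refine (σ.le_opNorm _).trans ?_
  have e2 : ‖a * e + c • e‖ = ‖((a : Unitization ℂ E) + algebraMap ℂ _ c) * (e : Unitization ℂ E)‖ := by
    rw [← Unitization.norm_inr (𝕜 := ℂ) (a * e + c • e)]
    congr 1
    rw [add_mul, Unitization.inr_add, Unitization.inr_mul, Unitization.inr_smul,
      Algebra.smul_def]
  rw [e2]
  have h5 : ‖(e : Unitization ℂ E)‖ ≤ 1 := by rwa [Unitization.norm_inr]
  calc _ ≤ 1 * (‖((a : Unitization ℂ E) + algebraMap ℂ _ c)‖ * 1) := by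
        gcongr
        exact (norm_mul_le _ _).trans (by gcongr)
    _ = _ := by ring

theorem exists_extreme {E : Type*} [NonUnitalCStarAlgebra E] (F : Set (E →L[ℂ] ℂ))
    (hne : F.Nonempty) (hb : ∀ φ ∈ F, ‖φ‖ ≤ 1)
    (hcl : IsClosed {φ : WeakDual ℂ E | WeakDual.toStrongDual φ ∈ F}) :
    (F.extremePoints ℝ).Nonempty := by
  have : LocallyConvexSpace ℝ (WeakDual ℂ E) :=
    WeakBilin.locallyConvexSpace (𝕜 := ℂ) (B := topDualPairing ℂ E)
  have hc : IsCompact {φ : WeakDual ℂ E | WeakDual.toStrongDual φ ∈ F} := by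
    refine IsCompact.of_isClosed_subset (WeakDual.isCompact_closedBall (0 : E →L[ℂ] ℂ) 1) hcl ?_
    intro φ hφ
    exact mem_closedBall_zero_iff.2 (hb _ hφ)
  obtain ⟨φ, hφ⟩ := hc.extremePoints_nonempty (by
    obtain ⟨φ, hφ⟩ := hne
    exact ⟨StrongDual.toWeakDual φ, hφ⟩)
  refine ⟨WeakDual.toStrongDual φ, hφ.1, ?_⟩
  intro x1 h1 x2 h2 h3
  exact hφ.2 (x₁ := StrongDual.toWeakDual x1) h1 (x₂ := StrongDual.toWeakDual x2) h2 h3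

theorem isClosed_pos (E : Type*) [NonUnitalCStarAlgebra E] :
    IsClosed {φ : WeakDual ℂ E | (∀ a : E, 0 ≤ WeakDual.toStrongDual φ (star a * a)) ∧
      ‖WeakDual.toStrongDual φ‖ ≤ 1} := by
  refine IsClosed.inter ?_ ?_
  · have : {φ : WeakDual ℂ E | ∀ a : E, 0 ≤ WeakDual.toStrongDual φ (star a * a)} =
      ⋂ a : E, {φ : WeakDual ℂ E | 0 ≤ WeakDual.toStrongDual φ (star a * a)} := by
      ext; simp
    change IsClosed {φ : WeakDual ℂ E | ∀ a : E, 0 ≤ WeakDual.toStrongDual φ (star a * a)}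
    rw [this]
    refine isClosed_iInter fun a => ?_
    exact isClosed_le continuous_const (WeakDual.eval_continuous (star a * a))
  · have := (WeakDual.isCompact_closedBall (0 : E →L[ℂ] ℂ) 1).isClosed
    have e : (WeakDual.toStrongDual ⁻¹' Metric.closedBall (0 : E →L[ℂ] ℂ) 1 : Set (WeakDual ℂ E)) =
        {φ : WeakDual ℂ E | ‖WeakDual.toStrongDual φ‖ ≤ 1} := by
      ext φ
      exact mem_closedBall_zero_iff
    rw [e] at this
    exact this

theorem exists_pos_norm {E : Type*} [NonUnitalCStarAlgebra E] (b : E) :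
    ∃ φ : E →L[ℂ] ℂ, (∀ a : E, 0 ≤ φ (star a * a)) ∧ ‖φ‖ ≤ 1 ∧
      φ (star b * b) = ‖star b * b‖ := by
  let := CStarAlgebra.spectralOrder (Unitization ℂ E)
  have := CStarAlgebra.spectralOrderedRing (Unitization ℂ E)
  set d := star b * b with hd
  let D : Unitization ℂ E := d
  have hD0 : 0 ≤ D := by
    change 0 ≤ ((d : E) : Unitization ℂ E)
    rw [hd, Unitization.inr_mul, Unitization.inr_star]
    exact star_mul_self_nonneg _
  have hsa : IsSelfAdjoint D := .of_nonneg hD0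
  have hn : IsStarNormal D := hsa.isStarNormal
  have hnorm : ‖D‖ = ‖d‖ := Unitization.norm_inr (𝕜 := ℂ) d
  have hspec : ((‖D‖ : ℝ) : ℂ) ∈ spectrum ℂ D := by
    have h1 := CStarAlgebra.norm_mem_spectrum_of_nonneg (a := D) hD0
    have := spectrum.algebraMap_mem ℂ h1
    simpa using this
  let S := StarAlgebra.elemental ℂ D
  let DS : S := ⟨D, StarAlgebra.elemental.self_mem ℂ D⟩
  have hspec2 : ((‖D‖ : ℝ) : ℂ) ∈ spectrum ℂ DS := by
    rw [StarSubalgebra.spectrum_eq (hS := StarAlgebra.elemental.isClosed ℂ D)]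
    exact hspec
  obtain ⟨χ, hχ⟩ := WeakDual.CharacterSpace.mem_spectrum_iff_exists.1 hspec2
  let f : StrongDual ℂ S := WeakDual.toStrongDual (χ : WeakDual ℂ S)
  have hf1 : f 1 = 1 := map_one χ
  have hfn : ‖f‖ ≤ 1 := by
    refine f.opNorm_le_bound zero_le_one fun x => ?_
    rw [one_mul]
    exact spectrum.norm_le_norm_of_mem (AlgHom.apply_mem_spectrum χ x)
  obtain ⟨g, hg, hgn⟩ := exists_extension_norm_eq (𝕜 := ℂ) (E := Unitization ℂ E)
    (Subalgebra.toSubmodule S.toSubalgebra) f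
  have hg1 : g 1 = 1 := (hg (1 : S)).trans hf1
  have hgD : g D = ‖d‖ := by
    rw [← hnorm]
    exact (hg DS).trans hχ
  have hgle : ∀ x, ‖g x‖ ≤ ‖x‖ := fun x => by
    have := g.le_opNorm x
    have h2 : ‖g‖ ≤ 1 := hgn.trans_le hfn
    nlinarith [norm_nonneg x]
  let φ : E →L[ℂ] ℂ := LinearMap.mkContinuous
    ((g : Unitization ℂ E →ₗ[ℂ] ℂ) ∘ₗ (Unitization.inrHom ℂ ℂ E)) 1 (by
      intro x
      rw [one_mul]
      refine (hgle _).trans ?_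
      exact (Unitization.norm_inr (𝕜 := ℂ) x).le)
  have hφ : ∀ x : E, φ x = g (x : Unitization ℂ E) := fun x => rfl
  refine ⟨φ, ?_, LinearMap.mkContinuous_norm_le _ zero_le_one _, hgD⟩
  refine pos_of_unital_bound φ fun a c => ?_
  have : φ a + c = g ((a : Unitization ℂ E) + algebraMap ℂ _ c) := by
    rw [map_add, hφ, Algebra.algebraMap_eq_smul_one, map_smul, hg1]
    simp
  rw [this]
  exact hgle _

/-- Pure states detect positive elements. -/
theorem exists_pure {E : Type*} [NonUnitalCStarAlgebra E] (b : E) (hb : b ≠ 0) :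
    ∃ φ : E →L[ℂ] ℂ, IsPureState φ ∧ φ (star b * b) ≠ 0 := by
  set d := star b * b with hd
  have hd0 : 0 < ‖d‖ := by
    rw [hd, CStarRing.norm_star_mul_self]
    have := norm_pos_iff.2 hb
    positivity
  obtain ⟨φ, hφ⟩ := exists_extreme
    {φ : E →L[ℂ] ℂ | ((∀ a : E, 0 ≤ φ (star a * a)) ∧ ‖φ‖ ≤ 1) ∧ φ d = ‖d‖}
    (by
      obtain ⟨φ, h1, h2, h3⟩ := exists_pos_norm b
      exact ⟨φ, ⟨h1, h2⟩, h3⟩)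
    (fun φ h => h.1.2)
    ((isClosed_pos E).inter
      (isClosed_eq (WeakDual.eval_continuous d) continuous_const))
  obtain ⟨⟨⟨h1, h2⟩, h3⟩, h4⟩ := hφ
  refine ⟨φ, ⟨⟨h1, le_antisymm h2 ?_⟩, ?_⟩, ?_⟩
  · have := φ.le_opNorm d
    rw [h3] at this
    simp only [Complex.norm_real, norm_norm] at this
    nlinarith
  · intro x1 hx1 x2 hx2 h
    refine h4 ?_ ?_ h
    all_goals
      obtain ⟨s, t, hs, ht, hst, rfl⟩ := h
      have key : ∀ x : E →L[ℂ] ℂ, IsState x → ∃ r : ℝ, x d = r ∧ r ≤ ‖d‖ := by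
        intro x hx
        have e1 := Complex.eq_coe_norm_of_nonneg (hx.1 b)
        refine ⟨‖x d‖, e1, ?_⟩
        have := x.le_opNorm d
        rwa [hx.2, one_mul] at this
      obtain ⟨r1, e1, l1⟩ := key x1 hx1
      obtain ⟨r2, e2, l2⟩ := key x2 hx2
      have h5 : s * r1 + t * r2 = ‖d‖ := by
        have : (s • x1 + t • x2) d = s * x1 d + t * x2 d := by simp
        rw [this, e1, e2] at h3
        exact_mod_cast h3
    · refine ⟨⟨hx1.1, hx1.2.le⟩, ?_⟩
      rw [e1]
      norm_cast
      nlinarith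
    · refine ⟨⟨hx2.1, hx2.2.le⟩, ?_⟩
      rw [e2]
      norm_cast
      nlinarith
  · rw [h3]
    exact_mod_cast hd0.ne'

/-- Membership of functional calculi modulo a closed star-ideal. -/
theorem cfcn_sub_mem {A : Type*} [NonUnitalCStarAlgebra A] (J : Submodule ℂ A)
    (hJ : IsClosed (J : Set A)) (hl : ∀ x, ∀ y ∈ J, x * y ∈ J) (hr : ∀ x ∈ J, ∀ y, x * y ∈ J)
    (hs : ∀ x ∈ J, star x ∈ J) (f : ℝ → ℝ) (hf : Continuous f) (s t : A)
    (hsa : IsSelfAdjoint s) (hta : IsSelfAdjoint t) (hst : s - t ∈ J) :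
    cfcₙ f s - cfcₙ f t ∈ J := by
  let P : NonUnitalStarSubalgebra ℂ (A × A) :=
    { carrier := {p | p.1 - p.2 ∈ J}
      add_mem' := by
        intro a b ha hb
        have := J.add_mem ha hb
        simpa [add_sub_add_comm] using this
      zero_mem' := by simp
      mul_mem' := by
        intro a b ha hb
        have h1 := hl a.1 _ hb
        have h2 := hr _ ha b.2
        have h3 := J.add_mem h1 h2
        have e : a.1 * (b.1 - b.2) + (a.1 - a.2) * b.2 = (a * b).1 - (a * b).2 := by
          simp [mul_sub, sub_mul]
        rw [e] at h3
        exact h3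
      smul_mem' := by
        intro c a ha
        have := J.smul_mem c ha
        rw [smul_sub] at this
        exact this
      star_mem' := by
        intro a ha
        have := hs _ ha
        rw [star_sub] at this
        exact this }
  have hP : IsClosed (P : Set (A × A)) := hJ.preimage (continuous_fst.sub continuous_snd)
  have hsat : IsSelfAdjoint (s, t) := Prod.ext hsa hta
  have h1 : cfcₙ f (s, t) ∈ P := cfcₙ_mem (𝕜 := ℝ) (𝕜' := ℂ) (p := IsSelfAdjoint) (s := P) f hst
  rw [cfcₙ_map_prod (S := ℂ) (pa := IsSelfAdjoint) (pb := IsSelfAdjoint) f s t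
    hf.continuousOn hsat hsa hta] at h1
  exact h1

theorem norm_le_add_ideal {A : Type*} [NonUnitalCStarAlgebra A]
    (B : NonUnitalStarSubalgebra ℂ A) (hB : IsClosed (B : Set A)) (J : Submodule ℂ A)
    (hJ : IsClosed (J : Set A)) (hl : ∀ x, ∀ y ∈ J, x * y ∈ J) (hr : ∀ x ∈ J, ∀ y, x * y ∈ J)
    (hs : ∀ x ∈ J, star x ∈ J) (hBJ : ∀ x ∈ B, x ∈ J → x = 0) (b : A) (hb : b ∈ B)
    (l : A) (hlJ : l ∈ J) : ‖b‖ ≤ ‖b + l‖ := by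
  have hsa : IsSelfAdjoint (star b * b) := .star_mul_self b
  have hta : IsSelfAdjoint (star (b + l) * (b + l)) := .star_mul_self _
  set s := star b * b with hs'
  set t := star (b + l) * (b + l) with ht'
  have hst : s - t ∈ J := by
    have : s - t = -(star b * l + star l * (b + l)) := by
      rw [hs', ht', star_add]; noncomm_ring
    rw [this]
    exact J.neg_mem (J.add_mem (hl _ _ hlJ) (hr _ (hs _ hlJ) _))
  let f : ℝ → ℝ := fun x => max (|x| - ‖t‖) 0
  have hf : Continuous f := by fun_prop
  have hf0 : f 0 = 0 := by simp [f]
  have h1 := cfcn_sub_mem J hJ hl hr hs f hf s t hsa hta hst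
  have hqn : ∀ (u : A), IsSelfAdjoint u → ∀ c, ‖u‖ ≤ c ↔ ∀ x ∈ quasispectrum ℝ u, ‖x‖ ≤ c := by
    intro u hu c
    have := norm_cfcₙ_le_iff (𝕜 := ℝ) (fun x => x) u c
    rwa [cfcₙ_id' ℝ u] at this
  have h2 : cfcₙ f t = 0 := by
    rw [← norm_le_zero_iff, norm_cfcₙ_le_iff f t 0 hf.continuousOn hf0 hta]
    intro x hx
    have := (hqn t hta ‖t‖).1 le_rfl x hx
    rw [Real.norm_eq_abs] at this
    simp [f, this]
  have hsB : s ∈ B := mul_mem (S := NonUnitalStarSubalgebra ℂ A) (star_mem hb) hb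
  have h3 : cfcₙ f s ∈ B := cfcₙ_mem (𝕜 := ℝ) (𝕜' := ℂ) (p := IsSelfAdjoint) (s := B) f hsB
  rw [h2, sub_zero] at h1
  have h4 := hBJ _ h3 h1
  rw [← norm_le_zero_iff, norm_cfcₙ_le_iff f s 0 hf.continuousOn hf0 hsa] at h4
  have h5 : ‖s‖ ≤ ‖t‖ := by
    rw [hqn s hsa]
    intro x hx
    have := h4 x hx
    rw [norm_le_zero_iff] at this
    have h6 : |x| - ‖t‖ ≤ f x := le_max_left _ _
    rw [Real.norm_eq_abs]
    linarith
  rw [hs', ht', CStarRing.norm_star_mul_self, CStarRing.norm_star_mul_self] at h5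
  exact le_of_sq_le_sq (by simpa [sq] using h5) (norm_nonneg _)

theorem exists_lift {A : Type*} [NonUnitalCStarAlgebra A]
    (B : NonUnitalStarSubalgebra ℂ A) (hB : IsClosed (B : Set A))
    (hnd : NondegSet (B : Set A)) (J : Submodule ℂ A)
    (hJ : IsClosed (J : Set A)) (hl : ∀ x, ∀ y ∈ J, x * y ∈ J) (hr : ∀ x ∈ J, ∀ y, x * y ∈ J)
    (hs : ∀ x ∈ J, star x ∈ J) (hBJ : ∀ x ∈ B, x ∈ J → x = 0)
    (φ : B →L[ℂ] ℂ) (hφ : IsState φ) :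
    ∃ σ : A →L[ℂ] ℂ, IsState σ ∧ (∀ b : B, σ b = φ b) ∧ ∀ x ∈ J, σ x = 0 := by
  have hiso := norm_le_add_ideal B hB J hJ hl hr hs hBJ
  let ι : B →ₗᵢ[ℂ] (A ⧸ J) :=
    { toLinearMap := J.mkQ ∘ₗ (NonUnitalSubalgebraClass.subtype B : B →ₗ[ℂ] A)
      norm_map' := by
        intro x
        refine le_antisymm (Submodule.Quotient.norm_mk_le J (x : A)) ?_
        refine le_of_forall_pos_lt_add fun ε hε => ?_
        obtain ⟨m, hm, hm2⟩ := Submodule.Quotient.norm_mk_lt (S := J)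
          (Submodule.Quotient.mk (x : A)) hε
        have h1 : m - (x : A) ∈ J := (Submodule.Quotient.eq J).1 hm
        have h2 := hiso x x.2 _ h1
        rw [add_sub_cancel] at h2
        exact h2.trans_lt hm2 }
  have hι : ∀ b : B, ι b = Submodule.Quotient.mk (b : A) := fun b => rfl
  let f : StrongDual ℂ (LinearMap.range ι.toLinearMap) :=
    φ.comp (ι.equivRange.symm.toContinuousLinearEquiv : _ →L[ℂ] B)
  obtain ⟨g, hg, hgn⟩ := exists_extension_norm_eq (𝕜 := ℂ) (E := A ⧸ J) _ f
  have hfn : ‖f‖ ≤ 1 := by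
    refine f.opNorm_le_bound zero_le_one fun x => ?_
    have := φ.le_opNorm (ι.equivRange.symm x)
    rw [hφ.2, LinearIsometryEquiv.norm_map] at this
    exact this
  have hgle : ∀ x, ‖g x‖ ≤ ‖x‖ := fun x => by
    have := g.le_opNorm x
    have h2 : ‖g‖ ≤ 1 := hgn.trans_le hfn
    nlinarith [norm_nonneg x]
  let σ : A →L[ℂ] ℂ := LinearMap.mkContinuous ((g : A ⧸ J →ₗ[ℂ] ℂ) ∘ₗ J.mkQ) 1 (by
    intro x
    rw [one_mul]
    exact (hgle _).trans (Submodule.Quotient.norm_mk_le J x))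
  have hσn : ‖σ‖ ≤ 1 := LinearMap.mkContinuous_norm_le _ zero_le_one _
  have hσB : ∀ b : B, σ b = φ b := by
    intro b
    have h1 : σ b = g (ι b) := rfl
    have h2 := hg (ι.equivRange b)
    have h3 : f (ι.equivRange b) = φ (ι.equivRange.symm (ι.equivRange b)) := rfl
    rw [LinearIsometryEquiv.symm_apply_apply] at h3
    rw [h1, ← h3, ← h2]
    rfl
  have hσJ : ∀ x ∈ J, σ x = 0 := by
    intro x hx
    have h1 : σ x = g (Submodule.Quotient.mk x) := rfl
    rw [h1, (Submodule.Quotient.mk_eq_zero J).2 hx, map_zero]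
  have hσ1 : 1 ≤ ‖σ‖ := by
    rw [← hφ.2]
    refine φ.opNorm_le_bound (norm_nonneg _) fun x => ?_
    rw [← hσB]
    exact σ.le_opNorm (x : A)
  refine ⟨σ, ⟨?_, le_antisymm hσn hσ1⟩, hσB, hσJ⟩
  obtain ⟨l, hlb, h1, h2, h3⟩ := exists_apprUnit B
  have hst := state_tendsto φ hφ l h1 h2
  -- `e * a → a` for `a` in `A`
  have hlim : ∀ a : A, Tendsto (fun e : B => (e : A) * a) l (𝓝 a) := by
    let V : Submodule ℂ A := Submodule.span ℂ {x : A | ∃ b ∈ (B : Set A), ∃ a : A, x = b * a}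
    have hV : ∀ a ∈ V, Tendsto (fun e : B => (e : A) * a) l (𝓝 a) := by
      intro a ha
      induction ha using Submodule.span_induction with
      | mem x hx =>
        obtain ⟨b, hb, a, rfl⟩ := hx
        have h4 := ((continuous_subtype_val.tendsto _).comp (h2 ⟨b, hb⟩)).mul_const a
        refine h4.congr fun e => ?_
        simp [mul_assoc]
      | zero => simp
      | add x y _ _ hx hy => simpa [mul_add] using hx.add hy
      | smul c x _ hx => simpa only [mul_smul_comm] using hx.const_smul c
    intro a
    rw [Metric.tendsto_nhds]
    intro ε hε
    have hmem : a ∈ closure (V : Set A) := by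
      have : closure (V : Set A) = Set.univ := hnd
      rw [this]; trivial
    obtain ⟨v, hv, hav⟩ := Metric.mem_closure_iff.1 hmem (ε / 3) (by positivity)
    have h5 := Metric.tendsto_nhds.1 (hV v hv) (ε / 3) (by positivity)
    filter_upwards [h1, h5] with e he1 he2
    rw [dist_eq_norm] at *
    have e1 : (e : A) * a - a = (e : A) * (a - v) + ((e : A) * v - v) + (v - a) := by noncomm_ring
    have h6 : ‖(e : A) * (a - v)‖ ≤ ‖a - v‖ := by
      refine (norm_mul_le _ _).trans ?_
      have h7 : ‖(e : A)‖ ≤ 1 := he1.2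
      nlinarith [norm_nonneg (a - v)]
    have h8 : ‖v - a‖ = ‖a - v‖ := norm_sub_rev _ _
    rw [e1]
    have := norm_add₃_le (a := (e : A) * (a - v)) (b := ((e : A) * v - v)) (c := (v - a))
    linarith
  have hlim' : ∀ a : A, Tendsto (fun e : B => a * (e : A)) l (𝓝 a) := by
    intro a
    have h4 := (hlim (star a)).star
    rw [star_star] at h4
    refine h4.congr' ?_
    filter_upwards [h1] with e he
    have h5 : star (e : A) = e := congrArg Subtype.val he.1
    rw [star_mul, star_star, h5]
  have hlim2 : ∀ a : A, Tendsto (fun e : B => a * ((e : A) * e)) l (𝓝 a) := by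
    intro a
    have h4 : Tendsto (fun e : B => (a * (e : A) - a) * e) l (𝓝 0) := by
      have h5 : Tendsto (fun e : B => ‖a * (e : A) - a‖) l (𝓝 0) := by
        have := ((hlim' a).sub_const a).norm
        simpa using this
      refine squeeze_zero_norm' ?_ h5
      filter_upwards [h1] with e he
      refine (norm_mul_le _ _).trans ?_
      have h7 : ‖(e : A)‖ ≤ 1 := he.2
      nlinarith [norm_nonneg (a * (e : A) - a)]
    have h6 := h4.add (hlim' a)
    rw [zero_add] at h6
    refine h6.congr fun e => ?_
    noncomm_ring
  refine pos_of_tendsto σ hσn (l.map fun e : B => (e : A) * e) ?_ ?_ ?_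
  · rw [Filter.eventually_map]
    filter_upwards [h1] with e he
    have h7 : ‖(e : A)‖ ≤ 1 := he.2
    exact (norm_mul_le _ _).trans (mul_le_one₀ h7 (norm_nonneg _) h7)
  · intro a
    rw [Filter.tendsto_map'_iff]
    exact hlim2 a
  · rw [Filter.tendsto_map'_iff]
    refine hst.congr fun e => ?_
    exact (hσB (e * e)).symm

theorem exists_pure_lift {A : Type*} [NonUnitalCStarAlgebra A]
    (B : NonUnitalStarSubalgebra ℂ A) (hB : IsClosed (B : Set A))
    (hnd : NondegSet (B : Set A)) (J : Submodule ℂ A)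
    (hJ : IsClosed (J : Set A)) (hl : ∀ x, ∀ y ∈ J, x * y ∈ J) (hr : ∀ x ∈ J, ∀ y, x * y ∈ J)
    (hs : ∀ x ∈ J, star x ∈ J) (hBJ : ∀ x ∈ B, x ∈ J → x = 0)
    (φ : B →L[ℂ] ℂ) (hφ : IsPureState φ) :
    ∃ σ : A →L[ℂ] ℂ, IsPureState σ ∧ (∀ b : B, σ b = φ b) ∧ ∀ x ∈ J, σ x = 0 := by
  obtain ⟨σ, hσ⟩ := exists_extreme
    {σ : A →L[ℂ] ℂ | ((∀ a : A, 0 ≤ σ (star a * a)) ∧ ‖σ‖ ≤ 1) ∧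
      ((∀ b : B, σ b = φ b) ∧ ∀ x : J, σ x = 0)}
    (by
      obtain ⟨σ, h1, h2, h3⟩ := exists_lift B hB hnd J hJ hl hr hs hBJ φ hφ.1
      exact ⟨σ, ⟨h1.1, h1.2.le⟩, h2, fun x => h3 x x.2⟩)
    (fun φ h => h.1.2)
    (by
      refine (isClosed_pos A).inter (IsClosed.inter ?_ ?_)
      · have : {σ : WeakDual ℂ A | ∀ b : B, σ b = φ b} = ⋂ b : B, {σ : WeakDual ℂ A | σ b = φ b} := by
          ext; simp
        change IsClosed {σ : WeakDual ℂ A | ∀ b : B, σ b = φ b}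
        rw [this]
        exact isClosed_iInter fun b => isClosed_eq (WeakDual.eval_continuous (b : A)) continuous_const
      · have : {σ : WeakDual ℂ A | ∀ b : J, σ b = 0} = ⋂ b : J, {σ : WeakDual ℂ A | σ b = 0} := by
          ext; simp
        change IsClosed {σ : WeakDual ℂ A | ∀ b : J, σ b = 0}
        rw [this]
        exact isClosed_iInter fun b => isClosed_eq (WeakDual.eval_continuous (b : A)) continuous_const)
  obtain ⟨⟨⟨h1, h2⟩, h3, h4⟩, h5⟩ := hσ
  have hle : ∀ x : A →L[ℂ] ℂ, ∀ ψ : B →L[ℂ] ℂ, (∀ b : B, x b = ψ b) → ‖ψ‖ ≤ ‖x‖ := by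
    intro x ψ h
    refine ψ.opNorm_le_bound (norm_nonneg _) fun b => ?_
    rw [← h]
    exact x.le_opNorm (b : A)
  have hσst : IsState σ := ⟨h1, le_antisymm h2 (hφ.1.2.symm.le.trans (hle σ φ h3))⟩
  refine ⟨σ, ⟨hσst, ?_⟩, h3, fun x hx => h4 ⟨x, hx⟩⟩
  -- restriction to `B`
  let R : (A →L[ℂ] ℂ) → (B →L[ℂ] ℂ) := fun x =>
    LinearMap.mkContinuous ((x : A →ₗ[ℂ] ℂ) ∘ₗ (NonUnitalSubalgebraClass.subtype B : B →ₗ[ℂ] A)) ‖x‖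
      (fun b => x.le_opNorm (b : A))
  have hR : ∀ x (b : B), R x b = x b := fun x b => rfl
  -- one-sided statement, used twice
  have key : ∀ x1 x2 : A →L[ℂ] ℂ, IsState x1 → IsState x2 → σ ∈ openSegment ℝ x1 x2 →
      ((∀ a : A, 0 ≤ x1 (star a * a)) ∧ ‖x1‖ ≤ 1) ∧
      ((∀ b : B, x1 b = φ b) ∧ ∀ x : J, x1 x = 0) := by
    intro x1 x2 hx1 hx2 hx
    obtain ⟨s, t, hs0, ht0, hst, hxe⟩ := hx
    have hxv : ∀ a, σ a = s * x1 a + t * x2 a := by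
      intro a
      rw [← hxe]
      simp
    have hRe : s • R x1 + t • R x2 = φ := by
      ext b
      rw [← h3 b, hxv]
      simp [hR]
    have n1 : ‖R x1‖ ≤ 1 := (hle x1 (R x1) fun b => rfl).trans hx1.2.le
    have n2 : ‖R x2‖ ≤ 1 := (hle x2 (R x2) fun b => rfl).trans hx2.2.le
    have n3 : 1 ≤ s * ‖R x1‖ + t * ‖R x2‖ := by
      rw [← hφ.1.2, ← hRe]
      refine (norm_add_le _ _).trans ?_
      rw [norm_smul, norm_smul, Real.norm_of_nonneg hs0.le, Real.norm_of_nonneg ht0.le]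
    have st1 : IsState (R x1) :=
      ⟨fun b => hx1.1 (b : A), le_antisymm n1 (by nlinarith)⟩
    have st2 : IsState (R x2) :=
      ⟨fun b => hx2.1 (b : A), le_antisymm n2 (by nlinarith)⟩
    have heq : R x1 = φ := hφ.2 st1 st2 ⟨s, t, hs0, ht0, hst, hRe⟩
    refine ⟨⟨hx1.1, hx1.2.le⟩, fun b => by rw [← heq, hR], ?_⟩
    rintro ⟨x, hxJ⟩
    refine pos_zero x1 hx1.1 x ?_
    have e1 := h4 ⟨star x * x, hl _ _ hxJ⟩
    have p1 := Complex.eq_coe_norm_of_nonneg (hx1.1 x)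
    have p2 := Complex.eq_coe_norm_of_nonneg (hx2.1 x)
    have e2 := hxv (star x * x)
    rw [e1, p1, p2] at e2
    have e3 : 0 = s * ‖x1 (star x * x)‖ + t * ‖x2 (star x * x)‖ := by exact_mod_cast e2
    have q1 := norm_nonneg (x1 (star x * x))
    have q2 := mul_nonneg ht0.le (norm_nonneg (x2 (star x * x)))
    rw [← norm_le_zero_iff]
    by_contra! hcon
    have := mul_pos hs0 hcon
    linarith
  intro x1 hx1 x2 hx2 hx
  exact h5 (key x1 x2 hx1 hx2 hx) (key x2 x1 hx2 hx1 (by rwa [openSegment_symm])) hx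

/-- Lifts force essentiality. -/
theorem essential_of_lifts {A : Type*} [NonUnitalCStarAlgebra A]
    (B : NonUnitalStarSubalgebra ℂ A) (p : (B →L[ℂ] ℂ) → Prop) (q : (A →L[ℂ] ℂ) → Prop)
    (hlift : ∀ J : Submodule ℂ A, IsClosed (J : Set A) → (∀ x, ∀ y ∈ J, x * y ∈ J) →
      (∀ x ∈ J, ∀ y, x * y ∈ J) → (∀ x ∈ J, star x ∈ J) → (∀ x ∈ B, x ∈ J → x = 0) →
      ∀ φ : B →L[ℂ] ℂ, p φ →
      ∃ σ : A →L[ℂ] ℂ, q σ ∧ (∀ b : B, σ b = φ b) ∧ ∀ x ∈ J, σ x = 0)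
    (h : ∃ Φ : Set (↥B →L[ℂ] ℂ), (∀ φ ∈ Φ, p φ) ∧
        ∀ σ : (↥B →L[ℂ] ℂ) → (A →L[ℂ] ℂ),
          (∀ φ ∈ Φ, q (σ φ) ∧ ∀ b : ↥B, σ φ (b : A) = φ b) →
          (⋂ φ ∈ Φ, Kset ⇑(σ φ)) = ({0} : Set A)) :
    EssentialIncl (B : Set A) := by
  obtain ⟨Φ, hΦ, H⟩ := h
  intro L hLc _ hBL
  let J : Submodule ℂ A :=
    { carrier := {a | ∀ c : ℂ, c • a ∈ L ∧ c • star a ∈ L}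
      add_mem' := by
        intro a b ha hb c
        rw [star_add, smul_add, smul_add]
        exact ⟨L.add_mem (ha c).1 (hb c).1, L.add_mem (ha c).2 (hb c).2⟩
      zero_mem' := by
        intro c
        simp [L.zero_mem]
      smul_mem' := by
        intro d a ha c
        rw [star_smul, smul_smul, smul_smul]
        exact ⟨(ha _).1, (ha _).2⟩ }
  have hmemJ : ∀ a, a ∈ J ↔ ∀ c : ℂ, c • a ∈ L ∧ c • star a ∈ L := fun a => Iff.rfl
  have hJL : ∀ a ∈ J, a ∈ L := fun a ha => by simpa using (ha 1).1
  have hJc : IsClosed (J : Set A) := by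
    have : (J : Set A) = ⋂ c : ℂ, ((fun a => c • a) ⁻¹' (L : Set A)) ∩
        ((fun a => c • star a) ⁻¹' (L : Set A)) := by
      ext a
      simp [hmemJ]
    rw [this]
    refine isClosed_iInter fun c => ?_
    exact (hLc.preimage (by fun_prop)).inter (hLc.preimage (by fun_prop))
  have hl : ∀ x, ∀ y ∈ J, x * y ∈ J := by
    intro x y hy c
    refine ⟨?_, ?_⟩
    · rw [← mul_smul_comm]
      exact L.mul_mem_left _ _ (hy c).1
    · rw [star_mul, ← smul_mul_assoc]
      exact L.mul_mem_right _ _ (hy c).2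
  have hs : ∀ x ∈ J, star x ∈ J := by
    intro x hx c
    rw [star_star]
    exact ⟨(hx c).2, (hx c).1⟩
  have hr : ∀ x ∈ J, ∀ y, x * y ∈ J := by
    intro x hx y
    have := hs _ (hl (star y) _ (hs _ hx))
    simpa using this
  have hBJ : ∀ x ∈ B, x ∈ J → x = 0 := by
    intro x hx hxJ
    have : x ∈ (B : Set A) ∩ (L : Set A) := ⟨hx, hJL x hxJ⟩
    rw [hBL] at this
    exact this
  have key := hlift J hJc hl hr hs hBJ
  classical
  choose! σ hσ using key
  have hK := H σ (fun φ hφ => ⟨(hσ φ (hΦ φ hφ)).1, (hσ φ (hΦ φ hφ)).2.1⟩)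
  have hJ0 : ∀ a ∈ J, a = 0 := by
    intro a ha
    have : a ∈ (⋂ φ ∈ Φ, Kset ⇑(σ φ)) := by
      simp only [Set.mem_iInter]
      intro φ hφ x y
      exact (hσ φ (hΦ φ hφ)).2.2 _ (hr _ (hl _ _ ha) _)
    rw [hK] at this
    exact this
  ext a
  constructor
  · intro ha
    have ha : a ∈ L := ha
    have hmem : (star a * a) * (star a * a) ∈ J := by
      intro c
      have e : star ((star a * a) * (star a * a)) = (star a * a) * (star a * a) := by simp [mul_assoc]
      have : c • ((star a * a) * (star a * a)) ∈ L := by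
        have e2 : c • ((star a * a) * (star a * a)) = (c • (star a * a * star a)) * a := by
          rw [smul_mul_assoc]; simp [mul_assoc]
        rw [e2]
        exact L.mul_mem_left _ _ ha
      rw [e]
      exact ⟨this, this⟩
    have h0 := hJ0 _ hmem
    have h1 : star (star a * a) * (star a * a) = 0 := by simpa using h0
    rw [CStarRing.star_mul_self_eq_zero_iff, CStarRing.star_mul_self_eq_zero_iff] at h1
    exact h1
  · rintro rfl
    exact L.zero_mem

/-- For an essential inclusion, all lifts of the set of pure states are faithful. -/
theorem faithful_of_essential {A : Type*} [NonUnitalCStarAlgebra A]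
    (B : NonUnitalStarSubalgebra ℂ A) (hB : IsClosed (B : Set A))
    (hnd : NondegSet (B : Set A)) (hess : EssentialIncl (B : Set A))
    (σ : (↥B →L[ℂ] ℂ) → (A →L[ℂ] ℂ))
    (hσ : ∀ φ ∈ {φ : B →L[ℂ] ℂ | IsPureState φ}, ∀ b : ↥B, σ φ (b : A) = φ b) :
    (⋂ φ ∈ {φ : B →L[ℂ] ℂ | IsPureState φ}, Kset ⇑(σ φ)) = ({0} : Set A) := by
  set K : Set A := ⋂ φ ∈ {φ : B →L[ℂ] ℂ | IsPureState φ}, Kset ⇑(σ φ) with hK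
  have hmem : ∀ a, a ∈ K ↔ ∀ φ : B →L[ℂ] ℂ, IsPureState φ → ∀ x y, σ φ (x * a * y) = 0 := by
    intro a
    simp [hK, Kset]
  have h0 : (0 : A) ∈ K := by
    rw [hmem]; intros; simp
  let L : TwoSidedIdeal A := TwoSidedIdeal.mk' K h0
    (by
      intro x y hx hy
      rw [hmem] at *
      intro φ hφ u v
      rw [mul_add, add_mul, map_add, hx φ hφ, hy φ hφ, add_zero])
    (by
      intro x hx
      rw [hmem] at *
      intro φ hφ u v
      rw [mul_neg, neg_mul, map_neg, hx φ hφ, neg_zero])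
    (by
      intro x y hy
      rw [hmem] at *
      intro φ hφ u v
      rw [← mul_assoc, hy φ hφ])
    (by
      intro x y hx
      rw [hmem] at *
      intro φ hφ u v
      have := hx φ hφ u (y * v)
      simpa [mul_assoc] using this)
  have hL : (L : Set A) = K := TwoSidedIdeal.coe_mk' ..
  have hBK : (B : Set A) ∩ K = {0} := by
    ext b
    constructor
    · rintro ⟨hb, hbK⟩
      by_contra hne
      have hne : b ≠ 0 := hne
      let b' : B := ⟨b, hb⟩
      have hb' : star b' * b' ≠ 0 := by
        rw [Ne, CStarRing.star_mul_self_eq_zero_iff]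
        intro h
        exact hne (congrArg Subtype.val h)
      obtain ⟨φ, hφ, hφ2⟩ := exists_pure (star b' * b') hb'
      apply hφ2
      rw [← hσ φ hφ]
      have := (hmem b).1 hbK φ hφ (star b) (star b * b)
      rw [← this]
      congr 1
      simp [b', mul_assoc]
    · rintro rfl
      exact ⟨B.zero_mem, h0⟩
  by_cases hu : K = Set.univ
  · have hB0 : ∀ b ∈ B, b = 0 := by
      intro b hb
      have : b ∈ (B : Set A) ∩ K := ⟨hb, by rw [hu]; trivial⟩
      rw [hBK] at this
      exact this
    have hspan : {x : A | ∃ b ∈ (B : Set A), ∃ a : A, x = b * a} ⊆ {0} := by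
      rintro x ⟨b, hb, a, rfl⟩
      rw [hB0 b hb]
      simp
    have hV : Submodule.span ℂ {x : A | ∃ b ∈ (B : Set A), ∃ a : A, x = b * a} = ⊥ := by
      rw [Submodule.span_eq_bot]
      exact hspan
    have h1 : closure (Submodule.span ℂ {x : A | ∃ b ∈ (B : Set A), ∃ a : A, x = b * a} : Set A)
      = Set.univ := hnd
    rw [hV] at h1
    simp only [Submodule.bot_coe, closure_singleton] at h1
    rw [hu, h1]
  · have hc : IsClosed K := by
      have : K = ⋂ φ ∈ {φ : B →L[ℂ] ℂ | IsPureState φ}, ⋂ x : A, ⋂ y : A,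
          {a | σ φ (x * a * y) = 0} := by
        ext a
        simp [hmem]
      rw [this]
      refine isClosed_biInter fun φ _ => isClosed_iInter fun x => isClosed_iInter fun y => ?_
      exact isClosed_eq (by fun_prop) continuous_const
    have := hess L (by rwa [hL]) (by rwa [hL]) (by rwa [hL])
    rwa [hL] at this

/-- For a non-degenerate `C*`-inclusion `B ⊆ A`, the following are equivalent:
(i) the inclusion is essential;
(ii) some set of states of `B` has all its `A`-lifts jointly essentially faithful;
(iii) some set of pure states of `B` has all its `A`-lifts jointly essentially faithful;
(iii') some set of pure states of `B` has all its pure `A`-lifts jointly essentially faithful. -/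
theorem stmt5 {A : Type*} [NonUnitalCStarAlgebra A]
    (B : NonUnitalStarSubalgebra ℂ A) (hBclosed : IsClosed (B : Set A))
    (hnd : NondegSet (B : Set A)) :
    (EssentialIncl (B : Set A) ↔
      (∃ Φ : Set (↥B →L[ℂ] ℂ), (∀ φ ∈ Φ, IsState φ) ∧
        ∀ σ : (↥B →L[ℂ] ℂ) → (A →L[ℂ] ℂ),
          (∀ φ ∈ Φ, IsState (σ φ) ∧ ∀ b : ↥B, σ φ (b : A) = φ b) →
          (⋂ φ ∈ Φ, Kset ⇑(σ φ)) = ({0} : Set A))) ∧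
    (EssentialIncl (B : Set A) ↔
      (∃ Φ : Set (↥B →L[ℂ] ℂ), (∀ φ ∈ Φ, IsPureState φ) ∧
        ∀ σ : (↥B →L[ℂ] ℂ) → (A →L[ℂ] ℂ),
          (∀ φ ∈ Φ, IsState (σ φ) ∧ ∀ b : ↥B, σ φ (b : A) = φ b) →
          (⋂ φ ∈ Φ, Kset ⇑(σ φ)) = ({0} : Set A))) ∧
    (EssentialIncl (B : Set A) ↔
      (∃ Φ : Set (↥B →L[ℂ] ℂ), (∀ φ ∈ Φ, IsPureState φ) ∧
        ∀ σ : (↥B →L[ℂ] ℂ) → (A →L[ℂ] ℂ),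
          (∀ φ ∈ Φ, IsPureState (σ φ) ∧ ∀ b : ↥B, σ φ (b : A) = φ b) →
          (⋂ φ ∈ Φ, Kset ⇑(σ φ)) = ({0} : Set A))) := by

  have hpure := faithful_of_essential B hBclosed hnd
  refine ⟨⟨fun h => ?_, fun h => ?_⟩, ⟨fun h => ?_, fun h => ?_⟩, ⟨fun h => ?_, fun h => ?_⟩⟩
  · exact ⟨{φ | IsPureState φ}, fun φ hφ => hφ.1, fun σ hσ => hpure h σ fun φ hφ => (hσ φ hφ).2⟩
  · exact essential_of_lifts B IsState IsState
      (fun J h1 h2 h3 h4 h5 => exists_lift B hBclosed hnd J h1 h2 h3 h4 h5) h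
  · exact ⟨{φ | IsPureState φ}, fun φ hφ => hφ, fun σ hσ => hpure h σ fun φ hφ => (hσ φ hφ).2⟩
  · refine essential_of_lifts B IsPureState IsState
      (fun J h1 h2 h3 h4 h5 φ hφ => exists_lift B hBclosed hnd J h1 h2 h3 h4 h5 φ hφ.1) h
  · exact ⟨{φ | IsPureState φ}, fun φ hφ => hφ, fun σ hσ => hpure h σ fun φ hφ => (hσ φ hφ).2⟩
  · exact essential_of_lifts B IsPureState IsPureState
      (fun J h1 h2 h3 h4 h5 => exists_pure_lift B hBclosed hnd J h1 h2 h3 h4 h5) h
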